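/- arXiv:1006.5198 — 7 statements merged into one kernel-verified Lean document; each statement's English description precedes it below -/
import Mathlib

section
/- Let φ be a faithful state on the matrix algebra M_n(ℂ) and let CP_φ be the set of unital completely positive maps τ on M_n(ℂ) with φ ∘ τ = φ. If τ ∈ CP_φ is ergodic, η ∈ CP_φ is arbitrary, and 0 < λ ≤ 1, then the map λτ + (1−λ)η is ergodic. In particular, the ergodic elements of CP_φ form a convex set, which is nonempty since x ↦ φ(x)·1 is an ergodic element of CP_φ. -/
/-!
The key point is that a projection `E` fixed by `l τ + (1 - l) η` is already fixed by `τ`.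
Put `F = 1 - E`. Compressing the fixed-point equation by `F` gives
`l F τ(E) F + (1 - l) F η(E) F = 0`, a sum of positive matrices, so `F τ(E) F = 0` since `l > 0`;
positivity of `τ(E)` then forces `τ(E) F = 0`, i.e. `τ(E) = E τ(E) E`. As `τ(E) ≤ 1`, this shows
`E - τ(E) = E τ(1 - E) E` is positive, and it is killed by the faithful state `φ`, so it vanishes
(`CPphi_map_eq_of_compression`).

For `x ↦ φ(x) 1`, complete positivity reduces to that of `φ` (`IsStateOn.posSemidef_blocks`),
because the image of a block matrix is a Kronecker product with the identity; a fixed projection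
is a scalar idempotent, hence `0` or `1`.
-/

open Matrix ComplexOrder

/-- The algebra of `n × n` complex matrices. -/
abbrev Mat (n : ℕ) := Matrix (Fin n) (Fin n) ℂ

/-- A linear map between matrix algebras is completely positive if, for every `k`,
applying it blockwise to a positive semidefinite `k × k` block matrix yields a
positive semidefinite block matrix (i.e. `τ ⊗ id_k` is positive for all `k`). -/
def IsCPmap {m n : ℕ} (T : Mat m →ₗ[ℂ] Mat n) : Prop :=
  ∀ k : ℕ, ∀ A : Matrix (Fin k × Fin m) (Fin k × Fin m) ℂ, A.PosSemidef →
    (Matrix.of fun p q : Fin k × Fin n =>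
      T (Matrix.of fun a b => A (p.1, a) (q.1, b)) p.2 q.2).PosSemidef

/-- A state on a (finite-dimensional) matrix algebra: a positive unital linear functional. -/
def IsStateOn {I : Type} [Fintype I] [DecidableEq I]
    (φ : Matrix I I ℂ →ₗ[ℂ] ℂ) : Prop :=
  φ 1 = 1 ∧ ∀ x : Matrix I I ℂ, x.PosSemidef → 0 ≤ (φ x).re ∧ (φ x).im = 0

/-- A faithful functional: `φ(x* x) = 0` implies `x = 0`. -/
def IsFaithful {n : ℕ} (φ : Mat n →ₗ[ℂ] ℂ) : Prop :=
  ∀ x : Mat n, φ (xᴴ * x) = 0 → x = 0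

/-- Membership in `CP_φ`: unital completely positive `φ`-preserving maps. -/
def MemCPphi {n : ℕ} (φ : Mat n →ₗ[ℂ] ℂ) (τ : Mat n →ₗ[ℂ] Mat n) : Prop :=
  IsCPmap τ ∧ τ 1 = 1 ∧ ∀ x : Mat n, φ (τ x) = φ x

/-- Membership in the convex set of unital completely positive maps. -/
def MemUCP {n : ℕ} (τ : Mat n →ₗ[ℂ] Mat n) : Prop :=
  IsCPmap τ ∧ τ 1 = 1

/-- An orthogonal projection in `M_n(ℂ)`. -/
def IsProjn {n : ℕ} (E : Mat n) : Prop := E.IsHermitian ∧ E * E = E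

/-- Ergodicity: the only invariant orthogonal projections are `0` and `1`. -/
def IsErgodic {n : ℕ} (τ : Mat n →ₗ[ℂ] Mat n) : Prop :=
  ∀ E : Mat n, IsProjn E → τ E = E → E = 0 ∨ E = 1

/-- The normalized trace `x ↦ tr(x)/n`, as a linear functional on `M_n(ℂ)`. -/
noncomputable def trφ (n : ℕ) : Mat n →ₗ[ℂ] ℂ :=
  ((n : ℂ)⁻¹) • Matrix.traceLinearMap (Fin n) ℂ ℂ

/-- The completely positive map `x ↦ ∑ k, v k * x * (v k)ᴴ` given by a Kraus family. -/
noncomputable def krausMap {n d : ℕ} (v : Fin d → Mat n) : Mat n →ₗ[ℂ] Mat n where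
  toFun x := ∑ k, v k * x * (v k)ᴴ
  map_add' x y := by simp [Matrix.mul_add, Matrix.add_mul, Finset.sum_add_distrib]
  map_smul' c x := by simp [Matrix.mul_smul, Matrix.smul_mul, Finset.smul_sum]

/-- Entrywise complex conjugation of a matrix. -/
def mconj {n : ℕ} (x : Mat n) : Mat n := x.map (starRingEnd ℂ)

/-- `τ` is an extreme point of the convex set `{σ | P σ}` of maps on `M_n(ℂ)`. -/
def IsExtremeIn {n : ℕ} (P : (Mat n →ₗ[ℂ] Mat n) → Prop)
    (τ : Mat n →ₗ[ℂ] Mat n) : Prop :=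
  P τ ∧ ∀ τ₀ τ₁ : Mat n →ₗ[ℂ] Mat n, P τ₀ → P τ₁ →
    ∀ l : ℝ, 0 < l → l < 1 → τ = (l : ℂ) • τ₁ + ((1 - l : ℝ) : ℂ) • τ₀ →
      τ₀ = τ ∧ τ₁ = τ

/-- Complete positivity of a map defined on an operator system `S ⊆ M_m(ℂ)`:
every positive semidefinite block matrix with entries in `S` is mapped blockwise to a
positive semidefinite block matrix. -/
def IsCPon {m n : ℕ} (S : Submodule ℂ (Mat m)) (τ : S →ₗ[ℂ] Mat n) : Prop :=
  ∀ k : ℕ, ∀ B : Matrix (Fin k) (Fin k) S,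
    (Matrix.of fun p q : Fin k × Fin m => ((B p.1 q.1 : Mat m)) p.2 q.2).PosSemidef →
    (Matrix.of fun p q : Fin k × Fin n => (τ (B p.1 q.1)) p.2 q.2).PosSemidef

section Helpers

open scoped MatrixOrder Kronecker

/-- Complete positivity at level `k = 1`. -/
lemma IsCPmap.map_posSemidef {m n : ℕ} {T : Mat m →ₗ[ℂ] Mat n} (hT : IsCPmap T) {A : Mat m}
    (hA : A.PosSemidef) : (T A).PosSemidef :=
  (hT 1 (A.submatrix Prod.snd Prod.snd) (hA.submatrix _)).submatrix fun a => ((0 : Fin 1), a)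

lemma Matrix.PosSemidef.exists_factor {n : ℕ} {A : Mat n} (hA : A.PosSemidef) :
    ∃ B : Mat n, A = Bᴴ * B :=
  CStarAlgebra.nonneg_iff_eq_star_mul_self.mp hA.nonneg

lemma IsProjn.posSemidef {n : ℕ} {E : Mat n} (hE : IsProjn E) : E.PosSemidef := by
  have h := posSemidef_conjTranspose_mul_self E
  rwa [hE.1.eq, hE.2] at h

lemma IsProjn.one_sub {n : ℕ} {E : Mat n} (hE : IsProjn E) : IsProjn (1 - E) := by
  refine ⟨isHermitian_one.sub hE.1, ?_⟩
  simp [mul_sub, sub_mul, hE.2]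

/-- If `τ(E)` has zero compression to the complement of `E`, then `τ(E) ≤ E`, and invariance of
the faithful state `φ` upgrades this to equality. -/
lemma CPphi_map_eq_of_compression {n : ℕ} {φ : Mat n →ₗ[ℂ] ℂ} (hφf : IsFaithful φ)
    {τ : Mat n →ₗ[ℂ] Mat n} (hτ : MemCPphi φ τ) {E : Mat n} (hE : IsProjn E)
    (h : (1 - E) * τ E * (1 - E) = 0) : τ E = E := by
  have hF := hE.one_sub
  obtain ⟨B, hB⟩ := (hτ.1.map_posSemidef hE.posSemidef).exists_factor
  have hBF : B * (1 - E) = 0 := by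
    rw [← conjTranspose_mul_self_eq_zero, conjTranspose_mul, hF.1.eq, ← h, hB]
    simp only [Matrix.mul_assoc]
  have hr : τ E * (1 - E) = 0 := by rw [hB, Matrix.mul_assoc, hBF, Matrix.mul_zero]
  have hl : (1 - E) * τ E = 0 := by
    have := congrArg conjTranspose hr
    rwa [conjTranspose_mul, hF.1.eq, (hτ.1.map_posSemidef hE.posSemidef).1.eq,
      conjTranspose_zero] at this
  have hr' : τ E * E = τ E := by
    rw [mul_sub, mul_one, sub_eq_zero] at hr; exact hr.symm
  have hl' : E * τ E = τ E := by
    rw [sub_mul, one_mul, sub_eq_zero] at hl; exact hl.symm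
  have hdiff : E - τ E = Eᴴ * τ (1 - E) * E := by
    rw [map_sub, hτ.2.1, hE.1.eq, mul_sub, sub_mul, mul_one, hE.2, hl', hr']
  have hpos : (E - τ E).PosSemidef := by
    rw [hdiff]
    exact (hτ.1.map_posSemidef hF.posSemidef).conjTranspose_mul_mul_same E
  obtain ⟨C, hC⟩ := hpos.exists_factor
  have hC0 : C = 0 := hφf C (by rw [← hC, map_sub, hτ.2.2, sub_self])
  rw [hC0, Matrix.mul_zero, sub_eq_zero] at hC
  exact hC.symm

/-- A state is completely positive: applying it blockwise to a positive block matrix gives a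
positive scalar matrix. -/
lemma IsStateOn.posSemidef_blocks {n : ℕ} {φ : Mat n →ₗ[ℂ] ℂ} (hφ : IsStateOn φ) (k : ℕ)
    {A : Matrix (Fin k × Fin n) (Fin k × Fin n) ℂ} (hA : A.PosSemidef) :
    (Matrix.of fun i j : Fin k =>
      φ (Matrix.of fun a b => A (i, a) (j, b))).PosSemidef := by
  rw [← isPositive_toEuclideanLin_iff, LinearMap.isPositive_iff_complex]
  intro x
  -- The quadratic form at `x` is `φ (Wᴴ A W)`, where `W = x ⊗ 1` is a block column.
  let W : Matrix (Fin k × Fin n) (Fin n) ℂ := Matrix.of fun p b => if p.2 = b then x p.1 else 0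
  have hW : Wᴴ * A * W = ∑ i, ∑ j, (star (x i) * x j) •
      (Matrix.of fun a b => A (i, a) (j, b) : Mat n) := by
    ext a b
    simp only [W, Matrix.mul_apply, conjTranspose_apply, Matrix.of_apply, Matrix.sum_apply,
      Matrix.smul_apply, Fintype.sum_prod_type, smul_eq_mul, apply_ite star, star_zero,
      ite_mul, zero_mul, mul_ite, mul_zero, Finset.sum_ite_eq', Finset.mem_univ, if_true,
      Finset.sum_mul]
    rw [Finset.sum_comm]
    refine Finset.sum_congr rfl fun i _ => Finset.sum_congr rfl fun j _ => ?_
    ring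
  have hpos := hφ.2 _ (hA.conjTranspose_mul_mul_same W)
  have hinner : inner ℂ (toEuclideanLin (Matrix.of fun i j : Fin k =>
      φ (Matrix.of fun a b => A (i, a) (j, b))) x) x = star (φ (Wᴴ * A * W)) := by
    rw [hW]
    simp only [map_sum, map_smul, PiLp.inner_apply, RCLike.inner_apply, toLpLin_apply,
      mulVec, dotProduct, Matrix.of_apply, star_sum, smul_eq_mul, star_mul', star_star,
      Finset.mul_sum, starRingEnd_apply]
    refine Finset.sum_congr rfl fun i _ => Finset.sum_congr rfl fun j _ => ?_
    ring
  rw [hinner]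
  refine ⟨?_, by simpa using hpos.1⟩
  apply Complex.ext <;> simp [hpos.2]

end Helpers

/-- a proper convex combination of an ergodic element of `CP_φ` with any
element of `CP_φ` (with ergodic weight `0 < λ ≤ 1`) is ergodic; in particular the ergodic
elements of `CP_φ` form a convex set, nonempty since `x ↦ φ(x)·1` is an ergodic element. -/
theorem birkhoff_stmt0 {n : ℕ} (φ : Mat n →ₗ[ℂ] ℂ) (hφ : IsStateOn φ) (hφf : IsFaithful φ)
    (τ η : Mat n →ₗ[ℂ] Mat n) (hτ : MemCPphi φ τ) (hτe : IsErgodic τ)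
    (hη : MemCPphi φ η) (l : ℝ) (hl0 : 0 < l) (hl1 : l ≤ 1) :
    IsErgodic ((l : ℂ) • τ + ((1 - l : ℝ) : ℂ) • η) ∧
      MemCPphi φ (φ.smulRight (1 : Mat n)) ∧ IsErgodic (φ.smulRight (1 : Mat n)) := by
  refine ⟨fun E hE hfix => hτe E hE ?_, ⟨fun k A hA => ?_, ?_, fun x => ?_⟩, fun E hE hfix => ?_⟩
  · apply CPphi_map_eq_of_compression hφf hτ hE
    have hF := hE.one_sub
    have hcomp : ∀ σ : Mat n →ₗ[ℂ] Mat n, MemCPphi φ σ →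
        ((1 - E) * σ E * (1 - E)).PosSemidef := fun σ hσ => by
      have := (hσ.1.map_posSemidef hE.posSemidef).conjTranspose_mul_mul_same (1 - E)
      rwa [hF.1.eq] at this
    have hX := (hcomp τ hτ).smul (Complex.zero_le_real.mpr hl0.le)
    have hY := (hcomp η hη).smul (Complex.zero_le_real.mpr (sub_nonneg.mpr hl1))
    have hsum : (l : ℂ) • ((1 - E) * τ E * (1 - E)) +
        ((1 - l : ℝ) : ℂ) • ((1 - E) * η E * (1 - E)) = 0 := by
      have h0 : (1 - E) * E * (1 - E) = 0 := by simp [sub_mul, hE.2]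
      calc _ = (1 - E) * (((l : ℂ) • τ + ((1 - l : ℝ) : ℂ) • η) E) * (1 - E) := by
            simp only [LinearMap.add_apply, LinearMap.smul_apply, mul_add, add_mul,
              mul_smul_comm, smul_mul_assoc]
        _ = 0 := by rw [hfix, h0]
    open scoped MatrixOrder in
      have hz := ((add_eq_zero_iff_of_nonneg hX.nonneg hY.nonneg).mp hsum).1
    exact (smul_eq_zero.mp hz).resolve_left (Complex.ofReal_ne_zero.mpr hl0.ne')
  · refine (congrArg PosSemidef ?_).mp
      ((hφ.posSemidef_blocks k hA).kronecker (PosSemidef.one (n := Fin n) (R := ℂ)))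
    ext p q
    simp [kroneckerMap_apply]
  · simp [hφ.1]
  · simp [hφ.1]
  · rw [LinearMap.smulRight_apply] at hfix
    have hc : φ E * φ E = φ E := by
      have h2 := congrArg φ hE.2
      rw [← hfix] at h2
      simpa [hφ.1] using h2
    rcases IsIdempotentElem.iff_eq_zero_or_one.mp hc with h | h
    · left; rw [← hfix, h, zero_smul]
    · right; rw [← hfix, h, one_smul]
end

section
/- Let φ be a faithful state on M_n(ℂ), let τ ∈ CP_φ and let λ ∈ (0,1) satisfy φ(x)·1 = λx + (1−λ)τ(x) for all x ∈ M_n(ℂ). Then τ is ergodic, and τ is aperiodic: there is no family E_0, …, E_{m−1} of nonzero mutually orthogonal projections in M_n(ℂ) with m ≥ 2 and τ(E_k) = E_{k+1 mod m} for all k. -/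
/-! If `τ E = E`, the decomposition reads `φ(E)·1 = E`, so `E` is a scalar projection, which gives
ergodicity.

For aperiodicity, suppose `E` and `F` are nonzero orthogonal projections with `τ E ⟂ E` and
`τ F ⟂ F` (two successive members of a cyclic family). Multiplying the decomposition of `φ(E)·1`
by `E` gives `φ(E) = λ`, and likewise `φ(F) = λ`. Take unit vectors `u ∈ ran E` and `v ∈ ran F`;
as `uu* ≤ E` and `vv* ≤ F`, both `φ(uu*)` and `φ(vv*)` are at most `λ`. Applying `τ` blockwise to
the rank-one positive matrix of the vector `(u, v) ∈ ℂ² ⊗ ℂⁿ` and evaluating the result at that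
same vector yields `(1 - λ)⁻¹ (φ(uu*) + φ(vv*) - 4λ) ≤ -2λ / (1 - λ) < 0`, so `τ` is not
completely positive (2-positivity already fails). -/

open Matrix ComplexOrder

/-- A nonzero projection fixes some unit vector. -/
lemma IsProjn.exists_unit {n : ℕ} {E : Mat n} (hE : IsProjn E) (h0 : E ≠ 0) :
    ∃ u : Fin n → ℂ, E *ᵥ u = u ∧ star u ⬝ᵥ u = 1 := by
  obtain ⟨x, hx⟩ : ∃ x, E *ᵥ x ≠ 0 := by
    by_contra! h
    exact h0 (Matrix.ext_of_mulVec_single fun i => by rw [h, zero_mulVec])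
  have hpos : 0 < star (E *ᵥ x) ⬝ᵥ (E *ᵥ x) := Matrix.dotProduct_star_self_pos_iff.2 hx
  obtain ⟨hre, him⟩ := Complex.pos_iff.1 hpos
  set p := star (E *ᵥ x) ⬝ᵥ (E *ᵥ x) with hp
  have hpr : p = ((p.re : ℝ) : ℂ) := Complex.ext rfl (by simp [← him])
  refine ⟨(((Real.sqrt p.re)⁻¹ : ℝ) : ℂ) • (E *ᵥ x), ?_, ?_⟩
  · rw [Matrix.mulVec_smul, Matrix.mulVec_mulVec, hE.2]
  · rw [star_smul, smul_dotProduct, dotProduct_smul, ← hp, hpr]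
    simp only [smul_eq_mul, Complex.star_def, Complex.conj_ofReal, Complex.ofReal_re]
    rw [← Complex.ofReal_mul, ← Complex.ofReal_mul, ← Complex.ofReal_one]
    congr 1
    have hs : Real.sqrt p.re ≠ 0 := (Real.sqrt_pos.2 hre).ne'
    field_simp
    exact (Real.sq_sqrt hre.le).symm

/-- `uu* ≤ E` for a unit vector `u` in the range of `E`: the difference is again a projection. -/
lemma IsProjn.sub_vecMulVec_posSemidef {n : ℕ} {E : Mat n} (hE : IsProjn E) {u : Fin n → ℂ}
    (hu : E *ᵥ u = u) (h1 : star u ⬝ᵥ u = 1) : (E - vecMulVec u (star u)).PosSemidef := by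
  have hu' : star u ᵥ* E = star u := by
    have := congrArg star hu
    rwa [star_mulVec, hE.1.eq] at this
  have hherm : (E - vecMulVec u (star u))ᴴ = E - vecMulVec u (star u) := by
    rw [conjTranspose_sub, hE.1.eq, conjTranspose_vecMulVec, star_star]
  have hsq : (E - vecMulVec u (star u))ᴴ * (E - vecMulVec u (star u))
      = E - vecMulVec u (star u) := by
    rw [hherm, sub_mul, mul_sub, mul_sub, hE.2, mul_vecMulVec, vecMulVec_mul,
      vecMulVec_mul_vecMulVec, hu, hu', h1]
    simp
  rw [← hsq]
  exact posSemidef_conjTranspose_mul_self _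

/-- The positivity inequality obtained by applying a completely positive map blockwise to the
rank-one matrix of a vector `w ∈ ℂᵏ ⊗ ℂⁿ` and evaluating at the same vector. -/
lemma IsCPmap.sum_nonneg {n k : ℕ} {τ : Mat n →ₗ[ℂ] Mat n} (hτ : IsCPmap τ)
    (w : Fin k → Fin n → ℂ) :
    0 ≤ ∑ i, ∑ j, star (w i) ⬝ᵥ (τ (vecMulVec (w i) (star (w j))) *ᵥ w j) := by
  let W : Fin k × Fin n → ℂ := fun p => w p.1 p.2
  have h := (hτ k _ (posSemidef_vecMulVec_self_star W)).dotProduct_mulVec_nonneg W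
  convert h using 1
  simp only [dotProduct, mulVec, Fintype.sum_prod_type, Finset.mul_sum]
  refine Finset.sum_congr rfl fun i _ => ?_
  rw [Finset.sum_comm]
  rfl

/-- The decomposition and `τ E ⟂ E` force `φ(E) = λ`, so `φ(uu*) ≤ λ` for unit `u ∈ ran E`. -/
lemma re_vecMulVec_le {n : ℕ} {φ : Mat n →ₗ[ℂ] ℂ} (hφ : IsStateOn φ) {τ : Mat n →ₗ[ℂ] Mat n}
    {l : ℝ}
    (hdec : ∀ x : Mat n, φ x • (1 : Mat n) = (l : ℂ) • x + ((1 - l : ℝ) : ℂ) • τ x)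
    {E : Mat n} (hE : IsProjn E) (h0 : E ≠ 0) (hτE : τ E * E = 0) {u : Fin n → ℂ}
    (hu : E *ᵥ u = u) (h1 : star u ⬝ᵥ u = 1) : (φ (vecMulVec u (star u))).re ≤ l := by
  have h := congrArg (· * E) (hdec E)
  simp only [add_mul, smul_mul_assoc, one_mul, hE.2, hτE, smul_zero, add_zero] at h
  have hl : φ E = l := smul_left_injective ℂ h0 h
  have h2 := (hφ.2 _ (hE.sub_vecMulVec_posSemidef hu h1)).1
  rw [map_sub, hl] at h2
  simpa using h2

/-- No two nonzero orthogonal projections are each sent by `τ` to something orthogonal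
to themselves. -/
lemma no_orthogonal_pair {n : ℕ} {φ : Mat n →ₗ[ℂ] ℂ} (hφ : IsStateOn φ)
    {τ : Mat n →ₗ[ℂ] Mat n} (hτ : IsCPmap τ) {l : ℝ} (hl0 : 0 < l) (hl1 : l < 1)
    (hdec : ∀ x : Mat n, φ x • (1 : Mat n) = (l : ℂ) • x + ((1 - l : ℝ) : ℂ) • τ x)
    {E F : Mat n} (hE : IsProjn E) (hF : IsProjn F) (hE0 : E ≠ 0) (hF0 : F ≠ 0)
    (hEF : E * F = 0) (hτE : τ E * E = 0) (hτF : τ F * F = 0) : False := by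
  obtain ⟨u, hu, hu1⟩ := hE.exists_unit hE0
  obtain ⟨v, hv, hv1⟩ := hF.exists_unit hF0
  have hA := re_vecMulVec_le hφ hdec hE hE0 hτE hu hu1
  have hB := re_vecMulVec_le hφ hdec hF hF0 hτF hv hv1
  have huv : star u ⬝ᵥ v = 0 := by
    have hu' : star u ᵥ* E = star u := by
      have := congrArg star hu
      rwa [star_mulVec, hE.1.eq] at this
    rw [← hu', ← hv, ← dotProduct_mulVec, mulVec_mulVec, hEF]
    simp
  have hvu : star v ⬝ᵥ u = 0 := by
    rw [← star_star (star v ⬝ᵥ u), star_dotProduct, star_star, huv, star_zero]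
  have key : ∀ a b : Fin n → ℂ,
      ((1 - l : ℝ) : ℂ) * (star a ⬝ᵥ (τ (vecMulVec a (star b)) *ᵥ b))
        = φ (vecMulVec a (star b)) * (star a ⬝ᵥ b) - l * ((star a ⬝ᵥ a) * (star b ⬝ᵥ b)) := by
    intro a b
    have h := congrArg (fun M : Mat n => star a ⬝ᵥ (M *ᵥ b)) (hdec (vecMulVec a (star b)))
    simp only [add_mulVec, smul_mulVec, one_mulVec, dotProduct_add, dotProduct_smul,
      vecMulVec_mulVec, smul_eq_mul, op_smul_eq_smul] at h
    linear_combination -h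
  have h := (hτ.sum_nonneg ![u, v])
  have hc : (0 : ℂ) ≤ ((1 - l : ℝ) : ℂ) := by
    exact_mod_cast (sub_pos.2 hl1).le
  have h' := mul_nonneg hc h
  simp only [Fin.sum_univ_two, cons_val_zero, cons_val_one, mul_add, key, hu1, hv1, huv,
    hvu] at h'
  have h2 := (Complex.le_def.1 h').1
  simp at h2
  linarith

/-- if `φ(x)·1 = λ x + (1-λ) τ(x)` for all `x` with `0 < λ < 1` and
`τ ∈ CP_φ`, then `τ` is ergodic and aperiodic: there is no family of `m ≥ 2` nonzero
mutually orthogonal projections cyclically permuted by `τ`. -/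
theorem birkhoff_stmt4 {n : ℕ} (φ : Mat n →ₗ[ℂ] ℂ) (hφ : IsStateOn φ) (hφf : IsFaithful φ)
    (τ : Mat n →ₗ[ℂ] Mat n) (hτ : MemCPphi φ τ)
    (l : ℝ) (hl0 : 0 < l) (hl1 : l < 1)
    (hdec : ∀ x : Mat n, φ x • (1 : Mat n) = (l : ℂ) • x + ((1 - l : ℝ) : ℂ) • τ x) :
    IsErgodic τ ∧
      ∀ m : ℕ, 2 ≤ m → ∀ E : Fin m → Mat n,
        (∀ k, IsProjn (E k)) → (∀ k, E k ≠ 0) →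
        (∀ k j, k ≠ j → E k * E j = 0) →
        ¬ (∀ k, τ (E k) = E (finRotate m k)) := by
  refine ⟨fun E hE hτE => ?_, fun m hm E hE hE0 hEE hrot => ?_⟩
  · have h : E = φ E • (1 : Mat n) := by
      rw [hdec E, hτE, ← add_smul]
      simp
    have hsq : φ E * φ E = φ E := by
      have h2 := congrArg φ hE.2
      rw [h] at h2
      simpa [hφ.1] using h2
    rcases IsIdempotentElem.iff_eq_zero_or_one.1 hsq with h0 | h1
    · left; rw [h, h0, zero_smul]
    · right; rw [h, h1, one_smul]
  · obtain ⟨m, rfl⟩ : ∃ k, m = k + 2 := ⟨m - 2, by omega⟩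
    have hne : ∀ k : Fin (m + 2), finRotate (m + 2) k ≠ k := fun k => by
      rw [finRotate_apply]; simp
    have hort : ∀ k, τ (E k) * E k = 0 := fun k => by
      rw [hrot k]; exact hEE _ _ (hne k)
    exact no_orthogonal_pair hφ hτ.1 hl0 hl1 hdec (hE 0) (hE 1) (hE0 0) (hE0 1)
      (hEE 0 1 (by simp)) (hort 0) (hort 1)
end

section
/- Let φ be the normalized trace on M_n(ℂ) and τ ∈ CP_φ. Suppose E_0, E_1, …, E_d (d ≥ 1) are nonzero mutually orthogonal projections in M_n(ℂ) with E_0 + ⋯ + E_d = 1 and τ(E_k) = E_{k+1} for 0 ≤ k ≤ d, where E_{d+1} = E_0. Then all the E_k have equal rank, and there exists a unitary u ∈ M_n(ℂ) with u E_k u* = E_{k+1 mod d+1} for all k such that the map σ(x) = τ(u* x u) belongs to CP_φ and satisfies σ(E_k) = E_k for every k; in particular σ is non-ergodic. Hence a proper periodic ergodic element of CP_φ is cocycle conjugate to a non-ergodic element of CP_φ. -/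
/-!
Preservation of the trace makes `tr (E k)`, hence the rank `r` of `E k`, independent of `k`. Each
`E k` therefore factors as `V k * (V k)ᴴ` with `V k : ℂ^r → ℂ^n` an isometry
(`exists_isometry_of_isProjn`), and the ranges of the `V k` are mutually orthogonal and span `ℂ^n`.
The matrix `u = ∑ k, V (k + 1) * (V k)ᴴ` satisfies `u * V k = V (k + 1)`; so it is unitary and
carries `E k` to `E (k + 1)`. Precomposing `τ` with conjugation by `uᴴ` preserves `CP_φ`
(`MemCPphi.comp_unitary_conj`) and undoes the cyclic shift, so that every `E k`, in particular the
nontrivial projection `E 0`, becomes a fixed point.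
-/

open Matrix ComplexOrder

/-- By the spectral theorem the columns of `V` can be taken to be the eigenvectors of `P` with
nonzero eigenvalue: idempotency forces that eigenvalue to be `1`. -/
lemma exists_isometry_of_isProjn {n : ℕ} {P : Mat n} (hP : IsProjn P) :
    ∃ (r : ℕ) (V : Matrix (Fin n) (Fin r) ℂ), Vᴴ * V = 1 ∧ V * Vᴴ = P := by
  obtain ⟨hH, hI⟩ := hP
  set U : Mat n := (hH.eigenvectorUnitary : Mat n) with hU
  set D : Fin n → ℂ := fun i => (hH.eigenvalues i : ℂ) with hD
  have hUU : Uᴴ * U = 1 := Unitary.coe_star_mul_self hH.eigenvectorUnitary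
  have hs : P = U * diagonal D * Uᴴ := by
    have := hH.spectral_theorem
    rw [Unitary.conjStarAlgAut_apply] at this
    exact this
  have hd : diagonal D = Uᴴ * P * U := by
    rw [hs]
    simp only [Matrix.mul_assoc, hUU, Matrix.mul_one]
    rw [← Matrix.mul_assoc, hUU, Matrix.one_mul]
  have hDD : diagonal D * diagonal D = diagonal D := by
    have hUU' : U * Uᴴ = 1 := mul_eq_one_comm.mp hUU
    calc diagonal D * diagonal D = Uᴴ * P * (U * Uᴴ) * P * U := by
          rw [hd]; simp only [Matrix.mul_assoc]
      _ = Uᴴ * (P * P) * U := by rw [hUU']; simp only [Matrix.mul_assoc, Matrix.one_mul]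
      _ = diagonal D := by rw [hI, hd]
  have h01 : ∀ i, D i ≠ 0 → D i = 1 := by
    intro i hi
    have := congrFun (congrFun hDD i) i
    simp only [diagonal_mul_diagonal, diagonal_apply_eq] at this
    exact mul_left_cancel₀ hi (by rw [this, mul_one])
  let e := (Fintype.equivFin {i // D i ≠ 0}).symm
  refine ⟨Fintype.card {i // D i ≠ 0}, U.submatrix id (fun j => (e j : Fin n)), ?_, ?_⟩
  · ext a b
    have := congrFun (congrFun hUU (e a)) (e b)
    simpa [Matrix.mul_apply, Matrix.one_apply, Subtype.val_inj] using this
  · ext a b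
    rw [hs]
    simp only [Matrix.mul_apply, submatrix_apply, conjTranspose_apply, id, diagonal_apply,
      mul_ite, mul_zero, Finset.sum_ite_eq', Finset.mem_univ, if_true]
    rw [e.sum_comp (fun i : {i // D i ≠ 0} => U a i * star (U b i)),
      ← Finset.sum_subtype (Finset.univ.filter (fun i => D i ≠ 0)) (by simp)
        (fun i => U a i * star (U b i)), Finset.sum_filter]
    refine Finset.sum_congr rfl fun i _ => ?_
    split_ifs with hi
    · rw [h01 i hi, mul_one]
    · rw [not_not.mp hi, mul_zero, zero_mul]

/-- Conjugation `x ↦ uᴴ * x * u` by a unitary is itself completely positive, unital and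
trace-preserving. -/
lemma MemCPphi.comp_unitary_conj {n : ℕ} {τ σ : Mat n →ₗ[ℂ] Mat n} (hτ : MemCPphi (trφ n) τ)
    {u : Mat n} (hu : u * uᴴ = 1) (hu' : uᴴ * u = 1) (hσ : ∀ x, σ x = τ (uᴴ * x * u)) :
    MemCPphi (trφ n) σ := by
  obtain ⟨hcp, h1, htr⟩ := hτ
  refine ⟨?_, ?_, ?_⟩
  · intro k A hA
    -- Blockwise conjugation of `A` by `u` is conjugation of `A` by `1 ⊗ u`.
    have hB := hA.conjTranspose_mul_mul_same
      (Matrix.kroneckerMap (· * ·) (1 : Matrix (Fin k) (Fin k) ℂ) u)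
    convert hcp k _ hB using 1
    ext p q
    simp only [of_apply, hσ]
    refine congrFun (congrFun (congrArg τ ?_) _) _
    ext a b
    simp [Matrix.mul_apply, Fintype.sum_prod_type, Matrix.one_apply, Finset.sum_ite_irrel,
      apply_ite, ite_mul, Finset.sum_mul]
  · rw [hσ, Matrix.mul_one, hu', h1]
  · intro x
    rw [hσ, htr]
    simp only [trφ, LinearMap.smul_apply, traceLinearMap_apply]
    rw [Matrix.trace_mul_comm, ← Matrix.mul_assoc, hu, Matrix.one_mul]

/-- if `τ ∈ CP_φ` (normalized trace `φ`) cyclically permutes a partition of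
unity into `d+1 ≥ 2` nonzero mutually orthogonal projections, then all the projections
have equal rank and there is a unitary `u` cyclically permuting them such that
`σ(x) = τ(u* x u)` lies in `CP_φ`, fixes every `E k` and is non-ergodic; hence a proper
periodic element of `CP_φ` is cocycle conjugate to a non-ergodic one. -/
theorem birkhoff_stmt5 {n d : ℕ} (hd : 1 ≤ d)
    (τ : Mat n →ₗ[ℂ] Mat n) (hτ : MemCPphi (trφ n) τ)
    (E : Fin (d + 1) → Mat n) (hproj : ∀ k, IsProjn (E k)) (hnz : ∀ k, E k ≠ 0)
    (horth : ∀ k j, k ≠ j → E k * E j = 0) (hsum : ∑ k, E k = 1)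
    (hcyc : ∀ k, τ (E k) = E (k + 1)) :
    (∀ k j, (E k).rank = (E j).rank) ∧
    ∃ u : Mat n, u * uᴴ = 1 ∧ uᴴ * u = 1 ∧ (∀ k, u * E k * uᴴ = E (k + 1)) ∧
      ∀ σ : Mat n →ₗ[ℂ] Mat n, (∀ x, σ x = τ (uᴴ * x * u)) →
        MemCPphi (trφ n) σ ∧ (∀ k, σ (E k) = E k) ∧ ¬ IsErgodic σ := by
  have hn : (n : ℂ) ≠ 0 := by
    rintro h
    obtain rfl : n = 0 := by exact_mod_cast h
    exact hnz 0 (Subsingleton.elim _ _)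
  have htrace1 : ∀ k, (E (k + 1)).trace = (E k).trace := by
    intro k
    have := hτ.2.2 (E k)
    rw [hcyc] at this
    simpa [trφ, hn] using this
  choose r W hW hWE using fun k => exists_isometry_of_isProjn (hproj k)
  have htrr : ∀ k, (E k).trace = r k := by
    intro k
    rw [← hWE, Matrix.trace_mul_comm, hW]
    simp
  have hr1 : ∀ k, r (k + 1) = r k := by
    intro k
    have := htrace1 k
    rw [htrr, htrr] at this
    exact_mod_cast this
  have hr : ∀ k, r k = r 0 := by
    intro k
    induction k using Fin.induction with
    | zero => rfl
    | succ i ih => rw [← Fin.coeSucc_eq_succ, hr1, ih]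
  have hV : ∀ k, ∃ V : Matrix (Fin n) (Fin (r 0)) ℂ, Vᴴ * V = 1 ∧ V * Vᴴ = E k := by
    intro k
    rw [← hr k]
    exact ⟨W k, hW k, hWE k⟩
  choose V hV1 hVE using hV
  have hV0 : ∀ k j, k ≠ j → (V k)ᴴ * V j = 0 := by
    intro k j hkj
    calc (V k)ᴴ * V j = ((V k)ᴴ * V k) * (V k)ᴴ * (V j * ((V j)ᴴ * V j)) := by
          rw [hV1, hV1, Matrix.one_mul, Matrix.mul_one]
      _ = (V k)ᴴ * ((V k * (V k)ᴴ) * (V j * (V j)ᴴ)) * V j := by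
          simp only [Matrix.mul_assoc]
      _ = 0 := by rw [hVE, hVE, horth k j hkj, Matrix.mul_zero, Matrix.zero_mul]
  have hrank : ∀ k, (E k).rank = r 0 := by
    intro k
    rw [← hVE, rank_self_mul_conjTranspose, ← rank_conjTranspose_mul_self, hV1, rank_one,
      Fintype.card_fin]
  refine ⟨fun k j => by rw [hrank, hrank], ∑ k, V (k + 1) * (V k)ᴴ, ?_⟩
  set u : Mat n := ∑ k, V (k + 1) * (V k)ᴴ with hu_def
  have huV : ∀ k, u * V k = V (k + 1) := by
    intro k
    rw [hu_def, Matrix.sum_mul, Finset.sum_eq_single k]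
    · rw [Matrix.mul_assoc, hV1, Matrix.mul_one]
    · intro j _ hj
      rw [Matrix.mul_assoc, hV0 j k hj, Matrix.mul_zero]
    · simp
  have huE : ∀ k, u * E k * uᴴ = E (k + 1) := by
    intro k
    rw [← hVE, ← hVE, ← huV, conjTranspose_mul]
    simp only [Matrix.mul_assoc]
  have hu : u * uᴴ = 1 := by
    calc u * uᴴ = ∑ k, u * E k * uᴴ := by
          rw [← Matrix.sum_mul, ← Matrix.mul_sum, hsum, Matrix.mul_one]
      _ = ∑ k, E (k + 1) := Finset.sum_congr rfl fun k _ => huE k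
      _ = 1 := by rw [← hsum]; exact Equiv.sum_comp (Equiv.addRight (1 : Fin (d + 1))) E
  have hu' : uᴴ * u = 1 := mul_eq_one_comm.mp hu
  refine ⟨hu, hu', huE, fun σ hσ => ?_⟩
  have hfix : ∀ k, σ (E k) = E k := by
    intro k
    obtain ⟨j, rfl⟩ : ∃ j, k = j + 1 := ⟨k - 1, (sub_add_cancel k 1).symm⟩
    have : uᴴ * E (j + 1) * u = E j := by
      rw [← huE]
      calc uᴴ * (u * E j * uᴴ) * u = (uᴴ * u) * E j * (uᴴ * u) := by
            simp only [Matrix.mul_assoc]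
        _ = E j := by rw [hu', Matrix.one_mul, Matrix.mul_one]
    rw [hσ, this, hcyc]
  refine ⟨hτ.comp_unitary_conj hu hu' hσ, hfix, fun herg => ?_⟩
  rcases herg (E 0) (hproj 0) (hfix 0) with h | h
  · exact hnz 0 h
  · have h01 : (0 : Fin (d + 1)) ≠ Fin.last d := by
      rw [Ne, Fin.ext_iff]
      simp; omega
    have := horth 0 _ h01
    rw [h, Matrix.one_mul] at this
    exact hnz _ this
end

section
/- Let v_1, …, v_d ∈ M_n(ℂ) satisfy ∑_{k=1}^d v_k v_k* = 1. Then the d×d block matrix P = ((v_i v_j*))_{1 ≤ i,j ≤ d}, viewed as an element of M_n(ℂ) ⊗ M_d(ℂ) ≅ M_{nd}(ℂ), is an orthogonal projection (P = P* = P²) if and only if ∑_{k=1}^d v_k* v_k = 1, i.e. if and only if the unital CP map τ(x) = ∑_k v_k x v_k* is trace preserving (doubly stochastic). -/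
/-! Let `W` be the block column with blocks `v_i`, so that `P = W Wᴴ` and
`S = Wᴴ W = ∑ (v k)ᴴ v k`.  If `S = 1` then `P² = W S Wᴴ = P`.  Conversely, cyclicity of the trace
gives `tr S = tr (∑ v k (v k)ᴴ) = tr 1`, while `P² = P` gives `tr S² = tr P² = tr P = tr S`;
hence `tr ((1 - S)ᴴ (1 - S)) = tr 1 - 2 tr S + tr S² = 0`, and `S = 1` since the trace is faithful.
For trace preservation, `tr (τ x) = tr (S x)` and the trace pairing is nondegenerate. -/

open Matrix ComplexOrder

/-- The block column with blocks `v_1, …, v_d`, as a `(d × n) × n` matrix. -/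
def blockCol {n d : ℕ} (v : Fin d → Mat n) : Matrix (Fin d × Fin n) (Fin n) ℂ :=
  Matrix.of fun p a => v p.1 p.2 a

lemma blockCol_mul_conjTranspose {n d : ℕ} (v : Fin d → Mat n) :
    (Matrix.of fun p q : Fin d × Fin n => (v p.1 * (v q.1)ᴴ) p.2 q.2) =
      blockCol v * (blockCol v)ᴴ := by
  ext p q
  simp [blockCol, Matrix.mul_apply]

lemma conjTranspose_mul_blockCol {n d : ℕ} (v : Fin d → Mat n) :
    (blockCol v)ᴴ * blockCol v = ∑ k, (v k)ᴴ * v k := by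
  ext a b
  simp [blockCol, Matrix.mul_apply, Matrix.sum_apply, Fintype.sum_prod_type]

lemma trace_krausMap {n d : ℕ} (v : Fin d → Mat n) (x : Mat n) :
    (krausMap v x).trace = ((∑ k, (v k)ᴴ * v k) * x).trace := by
  simp only [krausMap, LinearMap.coe_mk, AddHom.coe_mk, Matrix.trace_sum, Matrix.sum_mul]
  refine Finset.sum_congr rfl fun k _ => ?_
  rw [Matrix.trace_mul_comm, ← Matrix.mul_assoc]

/-- A Hermitian matrix whose trace and whose square's trace both equal `tr 1` is the identity:
the Hilbert–Schmidt norm of `1 - S` vanishes. -/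
lemma eq_one_of_trace {n : ℕ} (S : Mat n) (hS : Sᴴ = S)
    (h1 : S.trace = (1 : Mat n).trace) (h2 : (S * S).trace = (1 : Mat n).trace) : S = 1 := by
  have h : ((1 - S)ᴴ * (1 - S)).trace = 0 := by
    rw [Matrix.conjTranspose_sub, Matrix.conjTranspose_one, hS]
    simp only [Matrix.sub_mul, Matrix.mul_sub, Matrix.one_mul, Matrix.mul_one, Matrix.trace_sub,
      h1, h2]
    ring
  exact (sub_eq_zero.mp (Matrix.trace_conjTranspose_mul_self_eq_zero_iff.mp h)).symm

/-- for `v_1, …, v_d` with `∑ v_k v_k* = 1`, the block matrix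
`P = ((v_i v_j*))` in `M_n(ℂ) ⊗ M_d(ℂ)` is an orthogonal projection iff `∑ v_k* v_k = 1`,
iff the unital CP map `τ(x) = ∑ v_k x v_k*` is trace preserving. -/
theorem birkhoff_stmt6 {n d : ℕ} (v : Fin d → Mat n)
    (hv : ∑ k, v k * (v k)ᴴ = 1) :
    (((Matrix.of fun p q : Fin d × Fin n => (v p.1 * (v q.1)ᴴ) p.2 q.2)ᴴ =
        (Matrix.of fun p q : Fin d × Fin n => (v p.1 * (v q.1)ᴴ) p.2 q.2) ∧
      (Matrix.of fun p q : Fin d × Fin n => (v p.1 * (v q.1)ᴴ) p.2 q.2) *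
          (Matrix.of fun p q : Fin d × Fin n => (v p.1 * (v q.1)ᴴ) p.2 q.2) =
        (Matrix.of fun p q : Fin d × Fin n => (v p.1 * (v q.1)ᴴ) p.2 q.2))
      ↔ ∑ k, (v k)ᴴ * v k = 1) ∧
    ((∑ k, (v k)ᴴ * v k = 1) ↔ ∀ x : Mat n, (krausMap v x).trace = x.trace) := by
  have hτ1 : (∑ k, (v k)ᴴ * v k).trace = (1 : Mat n).trace := by
    have h := trace_krausMap v 1
    rw [Matrix.mul_one] at h
    rw [← h]
    congr 1
    simpa [krausMap] using hv
  refine ⟨?_, ?_⟩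
  · rw [← conjTranspose_mul_blockCol] at hτ1 ⊢
    rw [blockCol_mul_conjTranspose]
    set W := blockCol v
    constructor
    · rintro ⟨-, hP⟩
      refine eq_one_of_trace _ (by simp) hτ1 ?_
      have h := congrArg Matrix.trace hP
      rw [Matrix.trace_mul_comm W Wᴴ, hτ1] at h
      rw [← h, Matrix.mul_assoc W, Matrix.trace_mul_comm W]
      simp only [Matrix.mul_assoc]
    · intro hS
      refine ⟨by simp, ?_⟩
      rw [Matrix.mul_assoc, ← Matrix.mul_assoc Wᴴ, hS, Matrix.one_mul]
  · simp only [trace_krausMap]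
    constructor
    · intro hS x
      rw [hS, Matrix.one_mul]
    · intro h
      refine Matrix.ext_iff_trace_mul_right.mpr fun x => ?_
      rw [h x, Matrix.one_mul]
end

section
/- Let v_1, …, v_d and l_1, …, l_d be families in M_n(ℂ) with ∑_k v_k v_k* = ∑_k v_k* v_k = 1 and ∑_k l_k l_k* = ∑_k l_k* l_k = 1. Then there exist a unitary u ∈ M_n(ℂ) and a unitary block matrix W = ((w^i_j))_{1 ≤ i,j ≤ d} ∈ M_n(ℂ) ⊗ M_d(ℂ) such that ∑_{k=1}^d u* v_k* w^k_j = l_j* for every j = 1, …, d. -/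
/-!
Take `u = 1`. The block rows `R = (v_1*, …, v_d*)` and `S = (l_1*, …, l_d*)` are
`n × dn` matrices, and the hypotheses on `∑ v_k* v_k` and `∑ l_k* l_k` say that
`R R* = 1` and `S S* = 1`, i.e. that the rows of each are orthonormal in `ℂ^{dn}`. Completing
these rows to orthonormal bases (`exists_unitary_extension`) gives unitaries `A` and `B` of size
`dn` having `R` and `S` as one distinguished block row. Then `W = A* B` is unitary and
`A W = B`; reading off that block row yields `R W = S`.
-/

open Matrix ComplexOrder

/-- A coisometry `R` with `n` rows is the block row indexed by `k₀` of some unitary. -/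
lemma exists_unitary_extension {n d : ℕ} (k₀ : Fin d)
    (R : Matrix (Fin n) (Fin d × Fin n) ℂ) (hR : R * Rᴴ = 1) :
    ∃ A : Matrix (Fin d × Fin n) (Fin d × Fin n) ℂ,
      A * Aᴴ = 1 ∧ ∀ i q, A (k₀, i) q = R i q := by
  let r : Fin d × Fin n → EuclideanSpace ℂ (Fin d × Fin n) := fun p => WithLp.toLp 2 (R p.2)
  have hr : Orthonormal ℂ (Set.domRestrict {p : Fin d × Fin n | p.1 = k₀} r) := by
    rw [orthonormal_iff_ite]
    rintro ⟨⟨k, i⟩, hk⟩ ⟨⟨k', j⟩, hk'⟩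
    obtain rfl : k = k₀ := hk
    obtain rfl : k' = k := hk'
    have h := congrFun (congrFun hR j) i
    simpa [Matrix.mul_apply, Matrix.one_apply, r, Set.domRestrict, PiLp.inner_apply, eq_comm] using h
  obtain ⟨b, hb⟩ := hr.exists_orthonormalBasis_extension_of_card_eq (by simp)
  refine ⟨Matrix.of fun p q => b p q, ?_, fun i q => ?_⟩
  · ext p p'
    have h := orthonormal_iff_ite.mp b.orthonormal p' p
    simpa [Matrix.mul_apply, Matrix.one_apply, PiLp.inner_apply, eq_comm] using h
  · simp [hb (k₀, i) rfl, r]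

/-- The block row `(v_1*, …, v_d*)`. -/
def adjRow {n d : ℕ} (v : Fin d → Mat n) : Matrix (Fin n) (Fin d × Fin n) ℂ :=
  Matrix.of fun i p => (v p.1)ᴴ i p.2

lemma adjRow_mul_conjTranspose {n d : ℕ} (v : Fin d → Mat n)
    (hv : ∑ k, (v k)ᴴ * v k = 1) : adjRow v * (adjRow v)ᴴ = 1 := by
  rw [← hv]
  ext i j
  simp [adjRow, Matrix.mul_apply, Matrix.sum_apply, Fintype.sum_prod_type]

/-- given two doubly stochastic Kraus families `(v_k)` and `(l_k)` of the
same size `d` in `M_n(ℂ)`, there exist a unitary `u ∈ M_n(ℂ)` and a unitary block matrix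
`W = ((w^i_j)) ∈ M_n(ℂ) ⊗ M_d(ℂ)` with `∑_k u* v_k* w^k_j = l_j*` for every `j`. -/
theorem birkhoff_stmt7 {n d : ℕ} (v l : Fin d → Mat n)
    (hv1 : ∑ k, v k * (v k)ᴴ = 1) (hv2 : ∑ k, (v k)ᴴ * v k = 1)
    (hl1 : ∑ k, l k * (l k)ᴴ = 1) (hl2 : ∑ k, (l k)ᴴ * l k = 1) :
    ∃ (u : Mat n) (w : Fin d → Fin d → Mat n),
      u * uᴴ = 1 ∧ uᴴ * u = 1 ∧
      ((Matrix.of fun p q : Fin d × Fin n => (w p.1 q.1) p.2 q.2) *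
          (Matrix.of fun p q : Fin d × Fin n => (w p.1 q.1) p.2 q.2)ᴴ = 1 ∧
        (Matrix.of fun p q : Fin d × Fin n => (w p.1 q.1) p.2 q.2)ᴴ *
          (Matrix.of fun p q : Fin d × Fin n => (w p.1 q.1) p.2 q.2) = 1) ∧
      ∀ j, ∑ k, uᴴ * (v k)ᴴ * w k j = (l j)ᴴ := by
  rcases Nat.eq_zero_or_pos d with rfl | hd
  · exact ⟨1, fun k => k.elim0, by simp, by simp,
      ⟨Subsingleton.elim _ _, Subsingleton.elim _ _⟩, fun j => j.elim0⟩
  obtain ⟨A, hA, hAv⟩ :=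
    exists_unitary_extension ⟨0, hd⟩ (adjRow v) (adjRow_mul_conjTranspose v hv2)
  obtain ⟨B, hB, hBl⟩ :=
    exists_unitary_extension ⟨0, hd⟩ (adjRow l) (adjRow_mul_conjTranspose l hl2)
  have hW : (Aᴴ * B) * (Aᴴ * B)ᴴ = 1 := by
    rw [Matrix.conjTranspose_mul, Matrix.conjTranspose_conjTranspose, Matrix.mul_assoc,
      ← Matrix.mul_assoc B, hB, Matrix.one_mul]
    exact mul_eq_one_comm.mp hA
  refine ⟨1, fun k j => Matrix.of fun a b => (Aᴴ * B) (k, a) (j, b), by simp, by simp,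
    ⟨hW, mul_eq_one_comm.mp hW⟩, fun j => ?_⟩
  have hAW : A * (Aᴴ * B) = B := by rw [← Matrix.mul_assoc, hA, Matrix.one_mul]
  ext a b
  have h := congrFun (congrFun hAW (⟨0, hd⟩, a)) (j, b)
  rw [Matrix.mul_apply, Fintype.sum_prod_type, hBl] at h
  simp only [hAv] at h
  rw [Matrix.sum_apply]
  simp only [Matrix.conjTranspose_one, Matrix.one_mul, Matrix.mul_apply (M := (v _)ᴴ)]
  exact h
end

section
/- (Choi's extremality criterion) Let τ(x) = ∑_{k=1}^d v_k x v_k* be a unital completely positive map on M_n(ℂ) (so ∑_k v_k v_k* = 1) with v_1, …, v_d linearly independent. Then τ is an extreme point of the convex set of all unital completely positive maps on M_n(ℂ) if and only if the d² matrices {v_i v_j* : 1 ≤ i, j ≤ d} are linearly independent, i.e. ∑_{i,j} λ^i_j v_i v_j* = 0 for scalars λ^i_j ∈ ℂ implies λ^i_j = 0 for all i, j. -/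
/-!
The proof runs through Choi matrices. Let `V` be the matrix whose `k`-th column is the
vectorization of `v k`. The map `x ↦ ∑ C i j • v i * x * (v j)ᴴ` (`twist v C`) has Choi matrix
`V * C * Vᴴ` (`choi_twist`), and `krausMap v` is the case `C = 1`. Linear independence of `v` means
that `V` has a left inverse `L` (`exists_leftInverse_vecMat`), so `C ↦ twist v C` is injective.

* If the `v i * (v j)ᴴ` are independent and `krausMap v = a • σ + b • ρ` is a convex decomposition,
  then `choi σ ≥ 0` vanishes on `ker Vᴴ`, which forces `choi σ = V * C * Vᴴ` with
  `C = L * choi σ * Lᴴ` (`eq_twist_of_decomp`). Unitality of `σ` reads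
  `∑ (C - 1) i j • v i * (v j)ᴴ = 0`, so `C = 1` and `σ = krausMap v`.
* Conversely, if `H` is Hermitian with `∑ H i j • v i * (v j)ᴴ = 0`, then for small `ε > 0` the maps
  `twist v (1 ± ε H)` are unital and completely positive, with midpoint `krausMap v`. Extremality
  makes them equal, so `H = 0`. A general relation splits into its Hermitian and skew-Hermitian parts.
-/

open Matrix ComplexOrder

/-! ### Choi matrices and twisted Kraus maps -/

/-- The Choi matrix of a linear map `T`: its `(i, j)` block is `T` of the matrix unit `e i j`. -/
noncomputable def choi {n : ℕ} (T : Mat n →ₗ[ℂ] Mat n) :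
    Matrix (Fin n × Fin n) (Fin n × Fin n) ℂ :=
  Matrix.of fun p q => T (Matrix.single p.1 q.1 1) p.2 q.2

/-- The map `x ↦ ∑ i j, C i j • v i * x * (v j)ᴴ`, with coefficient matrix `C`. -/
noncomputable def twist {n d : ℕ} (v : Fin d → Mat n) (C : Matrix (Fin d) (Fin d) ℂ) :
    Mat n →ₗ[ℂ] Mat n where
  toFun x := ∑ i, ∑ j, C i j • (v i * x * (v j)ᴴ)
  map_add' x y := by simp [Matrix.mul_add, Matrix.add_mul, Finset.sum_add_distrib]
  map_smul' c x := by
    simp only [Matrix.mul_smul, Matrix.smul_mul, Finset.smul_sum, RingHom.id_apply]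
    simp only [smul_comm c]

/-- The matrix whose `k`-th column is the vectorization of `v k`. -/
def vecMat {n d : ℕ} (v : Fin d → Mat n) : Matrix (Fin n × Fin n) (Fin d) ℂ :=
  Matrix.of fun p k => v k p.2 p.1

lemma choi_injective {n : ℕ} {S T : Mat n →ₗ[ℂ] Mat n} (h : choi S = choi T) : S = T := by
  refine Matrix.ext_linearMap (R := ℂ) fun i j => LinearMap.ext_ring ?_
  ext p q
  exact congrFun (congrFun h (i, p)) (j, q)

lemma choi_posSemidef {n : ℕ} {T : Mat n →ₗ[ℂ] Mat n} (hT : IsCPmap T) :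
    (choi T).PosSemidef := by
  -- The block matrix with blocks `e i j` is the rank-one matrix `u uᴴ`, where `u = ∑ e i ⊗ e i`.
  let u : Fin n × Fin n → ℂ := fun p => if p.1 = p.2 then 1 else 0
  have h := hT n _ (Matrix.posSemidef_vecMulVec_self_star u)
  convert h using 1
  ext p q
  have : (Matrix.of fun a b => Matrix.vecMulVec u (star u) (p.1, a) (q.1, b)) =
      Matrix.single p.1 q.1 (1 : ℂ) := by
    ext a b
    simp only [Matrix.of_apply, Matrix.vecMulVec_apply, Pi.star_apply, u, Matrix.single_apply]
    by_cases h1 : p.1 = a <;> by_cases h2 : q.1 = b <;> simp [h1, h2]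
  simp only [choi, Matrix.of_apply, this]

lemma choi_twist {n d : ℕ} (v : Fin d → Mat n) (C : Matrix (Fin d) (Fin d) ℂ) :
    choi (twist v C) = vecMat v * C * (vecMat v)ᴴ := by
  ext p q
  have key : ∀ i j, (v i * Matrix.single p.1 q.1 (1 : ℂ) * (v j)ᴴ) p.2 q.2 =
      v i p.2 p.1 * star (v j q.2 q.1) := by
    intro i j
    rw [Matrix.mul_apply, Finset.sum_eq_single q.1]
    · simp
    · intro b _ hb
      simp [Matrix.mul_single_apply_of_ne _ _ _ _ _ hb]
    · simp
  simp only [choi, twist, LinearMap.coe_mk, AddHom.coe_mk, Matrix.of_apply, Matrix.sum_apply,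
    Matrix.smul_apply, key, smul_eq_mul]
  simp only [Matrix.mul_apply, vecMat, Matrix.of_apply, Matrix.conjTranspose_apply,
    Finset.sum_mul]
  rw [Finset.sum_comm]
  refine Finset.sum_congr rfl fun i _ => Finset.sum_congr rfl fun j _ => ?_
  ring

lemma twist_one {n d : ℕ} (v : Fin d → Mat n) : twist v 1 = krausMap v := by
  ext1 x
  simp [twist, krausMap, Matrix.one_apply, ite_smul]

lemma twist_apply_one {n d : ℕ} (v : Fin d → Mat n) (C : Matrix (Fin d) (Fin d) ℂ) :
    twist v C 1 = ∑ i, ∑ j, C i j • (v i * (v j)ᴴ) := by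
  simp [twist]

lemma twist_add {n d : ℕ} (v : Fin d → Mat n) (C D : Matrix (Fin d) (Fin d) ℂ) :
    twist v (C + D) = twist v C + twist v D := by
  ext1 x
  simp [twist, add_smul, Finset.sum_add_distrib]

lemma twist_smul {n d : ℕ} (v : Fin d → Mat n) (c : ℂ) (C : Matrix (Fin d) (Fin d) ℂ) :
    twist v (c • C) = c • twist v C := by
  ext1 x
  simp [twist, smul_smul, Finset.smul_sum]

lemma exists_leftInverse_vecMat {n d : ℕ} {v : Fin d → Mat n} (hind : LinearIndependent ℂ v) :
    ∃ L : Matrix (Fin d) (Fin n × Fin n) ℂ, L * vecMat v = 1 := by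
  have hinj : Function.Injective (Matrix.toLin' (vecMat v)) := by
    rw [← LinearMap.ker_eq_bot, LinearMap.ker_eq_bot']
    intro c hc
    funext k
    refine Fintype.linearIndependent_iff.mp hind c ?_ k
    ext p a
    have := congrFun hc (a, p)
    simpa [Matrix.toLin'_apply, Matrix.mulVec, dotProduct, vecMat, Matrix.sum_apply, mul_comm]
      using this
  obtain ⟨g, hg⟩ := LinearMap.exists_leftInverse_of_injective _ (LinearMap.ker_eq_bot.mpr hinj)
  refine ⟨LinearMap.toMatrix' g, ?_⟩
  have := congrArg LinearMap.toMatrix' hg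
  rwa [LinearMap.toMatrix'_comp, LinearMap.toMatrix'_toLin', LinearMap.toMatrix'_id] at this

lemma twist_eq_zero {n d : ℕ} {v : Fin d → Mat n} (hind : LinearIndependent ℂ v)
    {C : Matrix (Fin d) (Fin d) ℂ} (h : twist v C = 0) : C = 0 := by
  obtain ⟨L, hL⟩ := exists_leftInverse_vecMat hind
  have h0 : vecMat v * C * (vecMat v)ᴴ = 0 := by
    rw [← choi_twist, h]; ext; simp [choi]
  calc C = (L * vecMat v) * C * (L * vecMat v)ᴴ := by simp [hL]
    _ = L * (vecMat v * C * (vecMat v)ᴴ) * Lᴴ := by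
      simp only [Matrix.conjTranspose_mul, Matrix.mul_assoc]
    _ = 0 := by simp [h0]

/-! ### Complete positivity -/

lemma isCPmap_krausMap {n d : ℕ} (w : Fin d → Mat n) : IsCPmap (krausMap w) := by
  intro k A hA
  -- Blockwise, `krausMap w` conjugates `A` by the ampliations `1 ⊗ w l`.
  let W : Fin d → Matrix (Fin k × Fin n) (Fin k × Fin n) ℂ :=
    fun l => Matrix.kronecker (1 : Matrix (Fin k) (Fin k) ℂ) (w l)
  have h : (∑ l, W l * A * (W l)ᴴ).PosSemidef :=
    Matrix.posSemidef_sum _ fun l _ => hA.mul_mul_conjTranspose_same (W l)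
  convert h using 1
  ext p q
  simp only [krausMap, LinearMap.coe_mk, AddHom.coe_mk, Matrix.of_apply, Matrix.sum_apply]
  refine Finset.sum_congr rfl fun l _ => ?_
  simp [W, Matrix.mul_apply, Fintype.sum_prod_type, Matrix.one_apply,
    Finset.sum_mul, apply_ite]

open scoped MatrixOrder Matrix.Norms.L2Operator in
lemma exists_eq_conjTranspose_mul_self {d : ℕ} {C : Matrix (Fin d) (Fin d) ℂ}
    (hC : C.PosSemidef) : ∃ B : Matrix (Fin d) (Fin d) ℂ, C = Bᴴ * B :=
  CStarAlgebra.nonneg_iff_eq_star_mul_self.mp hC.nonneg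

/-- Factoring `C = Bᴴ * B` rewrites `twist v C` as a Kraus map with operators
`∑ i, star (B k i) • v i`. -/
lemma isCPmap_twist {n d : ℕ} (v : Fin d → Mat n) {C : Matrix (Fin d) (Fin d) ℂ}
    (hC : C.PosSemidef) : IsCPmap (twist v C) := by
  obtain ⟨B, rfl⟩ := exists_eq_conjTranspose_mul_self hC
  have : twist v (Bᴴ * B) = krausMap fun k => ∑ i, star (B k i) • v i := by
    ext1 x
    simp only [twist, krausMap, LinearMap.coe_mk, AddHom.coe_mk, Matrix.mul_apply,
      Matrix.conjTranspose_apply, Finset.sum_smul]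
    calc _ = ∑ i, ∑ k, ∑ j, (star (B k i) * B k j) • (v i * x * (v j)ᴴ) :=
          Finset.sum_congr rfl fun i _ => Finset.sum_comm
      _ = ∑ k, ∑ i, ∑ j, (star (B k i) * B k j) • (v i * x * (v j)ᴴ) := Finset.sum_comm
      _ = _ := by
        simp only [Matrix.conjTranspose_sum, Matrix.conjTranspose_smul, star_star,
          Finset.sum_mul, Finset.mul_sum, Matrix.smul_mul, Matrix.mul_smul, smul_smul]
        refine Finset.sum_congr rfl fun k _ => ?_
        rw [Finset.sum_comm]
        exact Finset.sum_congr rfl fun i _ => Finset.sum_congr rfl fun j _ => by rw [mul_comm]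
  rw [this]
  exact isCPmap_krausMap _

/-! ### Independence implies extremality -/

/-- A completely positive map occurring with positive weight in a decomposition of `krausMap v`
into two completely positive maps is of the form `twist v C`: its Choi matrix vanishes on
`ker (vecMat v)ᴴ`. -/
lemma eq_twist_of_decomp {n d : ℕ} {v : Fin d → Mat n} (hind : LinearIndependent ℂ v)
    {σ ρ : Mat n →ₗ[ℂ] Mat n} (hσ : IsCPmap σ) (hρ : IsCPmap ρ) {a b : ℝ} (ha : 0 < a)
    (hb : 0 < b) (h : krausMap v = (a : ℂ) • σ + (b : ℂ) • ρ) :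
    ∃ C, σ = twist v C := by
  obtain ⟨L, hL⟩ := exists_leftInverse_vecMat hind
  have hP := choi_posSemidef hσ
  have hQ := choi_posSemidef hρ
  set V := vecMat v with hV
  have hsum : V * Vᴴ = (a : ℂ) • choi σ + (b : ℂ) • choi ρ := by
    have : choi (krausMap v) = V * Vᴴ := by rw [← twist_one, choi_twist, Matrix.mul_one]
    rw [← this, h]
    ext p q
    simp [choi]
  have hker : ∀ x, Vᴴ *ᵥ x = 0 → choi σ *ᵥ x = 0 := by
    intro x hx
    rw [← hP.dotProduct_mulVec_zero_iff]
    have h1 := hP.dotProduct_mulVec_nonneg x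
    have h2 := hQ.dotProduct_mulVec_nonneg x
    have h3 : (a : ℂ) * (star x ⬝ᵥ choi σ *ᵥ x) + (b : ℂ) * (star x ⬝ᵥ choi ρ *ᵥ x) = 0 := by
      have := congrArg (fun M => star x ⬝ᵥ M *ᵥ x) hsum
      simp only [← Matrix.mulVec_mulVec, hx, Matrix.mulVec_zero, dotProduct_zero,
        Matrix.add_mulVec, Matrix.smul_mulVec, dotProduct_add, dotProduct_smul,
        smul_eq_mul] at this
      exact this.symm
    have ha' : (0 : ℂ) < a := by exact_mod_cast ha
    have hb' : (0 : ℂ) < b := by exact_mod_cast hb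
    have h4 := (add_eq_zero_iff_of_nonneg (mul_nonneg ha'.le h1) (mul_nonneg hb'.le h2)).mp h3
    exact (mul_eq_zero.mp h4.1).resolve_left ha'.ne'
  -- `1 - Lᴴ * Vᴴ` is an idempotent with range `ker Vᴴ`.
  have hLV : Vᴴ * Lᴴ = 1 := by rw [← Matrix.conjTranspose_mul, hL, Matrix.conjTranspose_one]
  have h5 : choi σ * (1 - Lᴴ * Vᴴ) = 0 := by
    refine Matrix.ext_of_mulVec_single fun i => ?_
    rw [← Matrix.mulVec_mulVec, Matrix.zero_mulVec]
    apply hker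
    rw [Matrix.mulVec_mulVec, Matrix.mul_sub, ← Matrix.mul_assoc, hLV, Matrix.one_mul,
      Matrix.mul_one, sub_self, Matrix.zero_mulVec]
  have h6 : choi σ = choi σ * (Lᴴ * Vᴴ) := by
    rwa [Matrix.mul_sub, Matrix.mul_one, sub_eq_zero] at h5
  have h7 : choi σ = V * L * choi σ := by
    have := congrArg Matrix.conjTranspose h6
    simpa [Matrix.conjTranspose_mul, hP.isHermitian.eq] using this
  refine ⟨L * choi σ * Lᴴ, choi_injective ?_⟩
  rw [choi_twist, ← hV]
  calc choi σ = V * L * (choi σ * (Lᴴ * Vᴴ)) := by rw [← h6, ← h7]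
    _ = _ := by simp only [Matrix.mul_assoc]

lemma eq_krausMap_of_decomp {n d : ℕ} {v : Fin d → Mat n} (hind : LinearIndependent ℂ v)
    (hv : ∑ k, v k * (v k)ᴴ = 1)
    (hlam : ∀ lam : Matrix (Fin d) (Fin d) ℂ,
      ∑ i, ∑ j, lam i j • (v i * (v j)ᴴ) = 0 → lam = 0)
    {σ ρ : Mat n →ₗ[ℂ] Mat n} (hσ : MemUCP σ) (hρ : MemUCP ρ) {a b : ℝ} (ha : 0 < a)
    (hb : 0 < b) (h : krausMap v = (a : ℂ) • σ + (b : ℂ) • ρ) : σ = krausMap v := by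
  obtain ⟨C, rfl⟩ := eq_twist_of_decomp hind hσ.1 hρ.1 ha hb h
  have h1 : twist v (C + (-1 : ℂ) • 1) 1 = 0 := by
    rw [twist_add, twist_smul, twist_one, LinearMap.add_apply, hσ.2]
    simp [krausMap, hv]
  have h2 := hlam _ (by rw [← twist_apply_one]; exact h1)
  have h3 : C = 1 := by simpa [← sub_eq_add_neg, sub_eq_zero] using h2
  rw [h3, twist_one]

/-! ### Extremality implies independence -/

open scoped MatrixOrder Matrix.Norms.L2Operator in
lemma exists_posSemidef_one_add_smul {d : ℕ} {H : Matrix (Fin d) (Fin d) ℂ}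
    (hH : H.IsHermitian) : ∃ ε : ℝ, 0 < ε ∧ (1 + (ε : ℂ) • H).PosSemidef ∧
      (1 + (-ε : ℂ) • H).PosSemidef := by
  have hsa : IsSelfAdjoint H := hH
  -- `1 ± ε H ≥ 0` follows from `± H ≤ ‖H‖`; the `+ 1` keeps the denominator nonzero.
  have hM : (0 : ℝ) < ‖H‖ + 1 := by positivity
  have aux : ∀ K : Matrix (Fin d) (Fin d) ℂ, IsSelfAdjoint K → ‖K‖ = ‖H‖ →
      (1 + (((‖H‖ + 1)⁻¹ : ℝ) : ℂ) • K).PosSemidef := by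
    intro K hK hn
    have h1 : ((algebraMap ℝ (Matrix (Fin d) (Fin d) ℂ) ‖K‖) + K).PosSemidef := by
      have := hK.neg_algebraMap_norm_le_self
      rw [Matrix.le_iff] at this
      simpa [add_comm] using this
    have h2 := (h1.add Matrix.PosSemidef.one).smul
      (show (0 : ℂ) ≤ (((‖H‖ + 1)⁻¹ : ℝ) : ℂ) by exact_mod_cast (inv_pos.mpr hM).le)
    convert h2 using 1
    rw [hn, Algebra.algebraMap_eq_smul_one]
    have : ((((‖H‖ + 1)⁻¹ : ℝ) : ℂ)) * (‖H‖ + 1 : ℂ) = 1 := by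
      have : (‖H‖ + 1 : ℂ) ≠ 0 := by exact_mod_cast hM.ne'
      push_cast
      exact inv_mul_cancel₀ this
    calc _ = ((((‖H‖ + 1)⁻¹ : ℝ) : ℂ) * (‖H‖ + 1 : ℂ)) • (1 : Matrix (Fin d) (Fin d) ℂ)
          + (((‖H‖ + 1)⁻¹ : ℝ) : ℂ) • K := by rw [this, one_smul]
      _ = _ := by
        rw [← Complex.coe_smul]
        module
  refine ⟨(‖H‖ + 1)⁻¹, inv_pos.mpr hM, aux H hsa rfl, ?_⟩
  simpa using aux (-H) hsa.neg (norm_neg H)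

/-- Extremality rules out Hermitian linear relations among the `v i * (v j)ᴴ`. -/
lemma hermitian_relation_eq_zero {n d : ℕ} {v : Fin d → Mat n} (hind : LinearIndependent ℂ v)
    (hv : ∑ k, v k * (v k)ᴴ = 1) (hext : IsExtremeIn MemUCP (krausMap v))
    {H : Matrix (Fin d) (Fin d) ℂ} (hH : H.IsHermitian)
    (h0 : ∑ i, ∑ j, H i j • (v i * (v j)ᴴ) = 0) : H = 0 := by
  obtain ⟨ε, hε, hp, hm⟩ := exists_posSemidef_one_add_smul hH
  have hmem : ∀ c : ℂ, (1 + c • H).PosSemidef → MemUCP (twist v (1 + c • H)) := by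
    intro c hc
    refine ⟨isCPmap_twist v hc, ?_⟩
    rw [twist_add, twist_smul, LinearMap.add_apply, LinearMap.smul_apply, twist_apply_one v H, h0,
      twist_one]
    simp [krausMap, hv]
  have h := (hext.2 _ _ (hmem _ hp) (hmem _ hm) (1 / 2) (by norm_num) (by norm_num) (by
    rw [twist_add, twist_add, twist_smul, twist_smul, twist_one]
    push_cast
    module)).1
  rw [twist_add, twist_one, add_eq_left, twist_smul, smul_eq_zero] at h
  exact twist_eq_zero hind (h.resolve_left (by exact_mod_cast hε.ne'))

lemma relation_conjTranspose {n d : ℕ} {v : Fin d → Mat n} {lam : Matrix (Fin d) (Fin d) ℂ}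
    (h0 : ∑ i, ∑ j, lam i j • (v i * (v j)ᴴ) = 0) :
    ∑ i, ∑ j, lamᴴ i j • (v i * (v j)ᴴ) = 0 := by
  have := congrArg Matrix.conjTranspose h0
  simp only [Matrix.conjTranspose_sum, Matrix.conjTranspose_smul, Matrix.conjTranspose_mul,
    Matrix.conjTranspose_conjTranspose, Matrix.conjTranspose_zero] at this
  rw [Finset.sum_comm] at this
  simpa only [Matrix.conjTranspose_apply] using this

/-! ### The criterion -/

/-- Choi's extremality criterion: a unital CP map `τ(x) = ∑ v_k x v_k*`
with linearly independent Kraus family is extreme in the convex set of unital CP maps on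
`M_n(ℂ)` iff the `d²` matrices `v_i v_j*` are linearly independent. -/
theorem birkhoff_stmt9 {n d : ℕ} (v : Fin d → Mat n)
    (hind : LinearIndependent ℂ v) (hv : ∑ k, v k * (v k)ᴴ = 1) :
    IsExtremeIn MemUCP (krausMap v) ↔
      ∀ lam : Matrix (Fin d) (Fin d) ℂ,
        ∑ i, ∑ j, lam i j • (v i * (v j)ᴴ) = 0 → lam = 0 := by
  constructor
  · intro hext lam h0
    have h0' := relation_conjTranspose h0
    rw [← twist_apply_one] at h0 h0'
    -- `lam` is recovered from the Hermitian matrices `lam + lamᴴ` and `I • (lam - lamᴴ)`.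
    have h1 : lam + lamᴴ = 0 := by
      refine hermitian_relation_eq_zero hind hv hext
        (Matrix.isHermitian_add_transpose_self lam) ?_
      rw [← twist_apply_one, twist_add, LinearMap.add_apply, h0, h0', add_zero]
    have h2 : Complex.I • (lam + (-1 : ℂ) • lamᴴ) = 0 := by
      refine hermitian_relation_eq_zero hind hv hext ?_ ?_
      · ext i j
        simp
        ring
      · rw [← twist_apply_one, twist_smul, twist_add, twist_smul]
        simp [h0, h0']
    have h3 := (smul_eq_zero.mp h2).resolve_left Complex.I_ne_zero
    have h4 : (2 : ℂ) • lam = (lam + lamᴴ) + (lam + (-1 : ℂ) • lamᴴ) := by module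
    rw [h1, h3, add_zero] at h4
    exact (smul_eq_zero.mp h4).resolve_left two_ne_zero
  · intro hlam
    refine ⟨⟨isCPmap_krausMap v, by simpa [krausMap] using hv⟩, ?_⟩
    intro τ₀ τ₁ h₀ h₁ l hl0 hl1 h
    exact ⟨eq_krausMap_of_decomp hind hv hlam h₀ h₁ (sub_pos.mpr hl1) hl0
        (by rw [h, add_comm]),
      eq_krausMap_of_decomp hind hv hlam h₁ h₀ hl0 (sub_pos.mpr hl1) h⟩
end

section
/- Let τ be a unital completely positive map on M_n(ℂ) admitting a faithful invariant state φ (φ ∘ τ = φ, φ faithful). Let S ⊆ M_n(ℂ) be a subset containing the identity such that τ(x) = x for every x ∈ S and such that the smallest *-subalgebra of M_n(ℂ) containing S is all of M_n(ℂ). Then τ is the identity map on M_n(ℂ). -/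
/-!
The fixed points of `τ` form a `*`-subalgebra, which contains `S` and hence everything.
Closure under `*` holds because a CP map is `*`-preserving (`IsCPmap.map_conjTranspose`).  For products,
the Kadison–Schwarz inequality (`IsCPmap.kadison_schwarz`, obtained by compressing a positive
`2 × 2` block matrix) shows that `D = τ (xᴴ x) - xᴴ x` is positive semidefinite for a fixed point
`x`; invariance of `φ` gives `φ D = 0`, and faithfulness forces `D = 0`.  So `xᴴ x` is fixed
whenever `x` is, and polarization makes `xᴴ y` fixed whenever `x` and `y` are.
-/

open Matrix ComplexOrder

/-- The block form of complete positivity: since `[(v p)ᴴ (v q)]` is a Gram matrix, its image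
`[T ((v p)ᴴ (v q))]` is positive semidefinite. -/
lemma IsCPmap.gram {m n k : ℕ} {T : Mat m →ₗ[ℂ] Mat n} (h : IsCPmap T) (v : Fin k → Mat m) :
    (Matrix.of fun p q : Fin k × Fin n => T ((v p.1)ᴴ * v q.1) p.2 q.2).PosSemidef := by
  let B : Matrix (Fin m) (Fin k × Fin m) ℂ := Matrix.of fun i p => v p.1 i p.2
  have hB := h k _ (Matrix.posSemidef_conjTranspose_mul_self B)
  exact hB

lemma IsCPmap.map_conjTranspose {m n : ℕ} {T : Mat m →ₗ[ℂ] Mat n} (h : IsCPmap T) (x : Mat m) :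
    T xᴴ = (T x)ᴴ := by
  have hG := (h.gram ![1, x]).isHermitian
  ext i j
  simpa using (hG.apply (1, i) (0, j)).symm

/-- The Kadison–Schwarz inequality `τ(x)ᴴ τ(x) ≤ τ(xᴴ x)`. -/
lemma IsCPmap.kadison_schwarz {m n : ℕ} {T : Mat m →ₗ[ℂ] Mat n} (h : IsCPmap T) (h1 : T 1 = 1)
    (x : Mat m) : (T (xᴴ * x) - (T x)ᴴ * T x).PosSemidef := by
  -- Compress the block matrix `[1, T x; (T x)ᴴ, T (xᴴ x)]` by the column `[-T x; 1]`.
  let w : Fin 2 → Mat n := ![-T x, 1]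
  let C : Matrix (Fin 2 × Fin n) (Fin n) ℂ := Matrix.of fun p j => w p.1 p.2 j
  have hG := (h.gram ![1, x]).conjTranspose_mul_mul_same C
  have key : Cᴴ * (Matrix.of fun p q : Fin 2 × Fin n =>
      T ((![1, x] p.1)ᴴ * ![1, x] q.1) p.2 q.2) * C =
      ∑ q, (∑ p, (w p)ᴴ * T ((![1, x] p)ᴴ * ![1, x] q)) * w q := by
    ext i j
    simp [Matrix.mul_apply, Fintype.sum_prod_type, C, Matrix.add_apply,
      Finset.sum_add_distrib, add_mul]
  rw [key] at hG
  convert hG using 1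
  simp [Fin.sum_univ_two, w, h1, h.map_conjTranspose, sub_eq_neg_add]

open scoped MatrixOrder Matrix.Norms.L2Operator in
lemma fixed_gram {n : ℕ} {τ : Mat n →ₗ[ℂ] Mat n} (hcp : IsCPmap τ) (hunital : τ 1 = 1)
    {φ : Mat n →ₗ[ℂ] ℂ} (hφf : IsFaithful φ) (hinv : ∀ x, φ (τ x) = φ x)
    {x : Mat n} (hx : τ x = x) : τ (xᴴ * x) = xᴴ * x := by
  have hD := hcp.kadison_schwarz hunital x
  rw [hx] at hD
  obtain ⟨y, hy⟩ := CStarAlgebra.nonneg_iff_eq_star_mul_self.mp hD.nonneg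
  rw [star_eq_conjTranspose] at hy
  have h0 : φ (yᴴ * y) = 0 := by rw [← hy, map_sub, hinv, sub_self]
  rw [hφf y h0, Matrix.mul_zero] at hy
  exact sub_eq_zero.mp hy

/-- Polarization of `fixed_gram`. -/
lemma fixed_conjTranspose_mul {n : ℕ} {τ : Mat n →ₗ[ℂ] Mat n} (hcp : IsCPmap τ)
    (hunital : τ 1 = 1) {φ : Mat n →ₗ[ℂ] ℂ} (hφf : IsFaithful φ) (hinv : ∀ x, φ (τ x) = φ x)
    {x y : Mat n} (hx : τ x = x) (hy : τ y = y) : τ (xᴴ * y) = xᴴ * y := by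
  have hg : ∀ {z : Mat n}, τ z = z → τ (zᴴ * z) = zᴴ * z :=
    fun hz => fixed_gram hcp hunital hφf hinv hz
  have e1 := hg (z := x + y) (by rw [map_add, hx, hy])
  have e2 := hg (z := x + Complex.I • y) (by rw [map_add, map_smul, hx, hy])
  have I2 := Complex.I_mul_I
  simp only [conjTranspose_add, conjTranspose_smul, Matrix.add_mul, Matrix.mul_add,
    Matrix.smul_mul, Matrix.mul_smul, map_add, map_smul, hg hx, hg hy] at e1 e2
  ext i j
  have f1 := congrFun₂ e1 i j
  have f2 := congrFun₂ e2 i j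
  simp only [Matrix.add_apply, Matrix.smul_apply, smul_eq_mul, Complex.star_def,
    Complex.conj_I] at f1 f2
  linear_combination (1 / 2 : ℂ) * f1 - (Complex.I / 2) * f2 + (1 / 2 : ℂ) *
    (τ (xᴴ * y) i j - τ (yᴴ * x) i j - (xᴴ * y) i j + (yᴴ * x) i j) * I2

/-- a unital CP map on `M_n(ℂ)` with a faithful invariant state which fixes
pointwise a subset `S ∋ 1` generating `M_n(ℂ)` as a `*`-algebra is the identity map. -/
theorem birkhoff_stmt16 {n : ℕ} (τ : Mat n →ₗ[ℂ] Mat n)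
    (hcp : IsCPmap τ) (hunital : τ 1 = 1)
    (φ : Mat n →ₗ[ℂ] ℂ) (hφ : IsStateOn φ) (hφf : IsFaithful φ)
    (hinv : ∀ x, φ (τ x) = φ x)
    (S : Set (Mat n)) (h1 : (1 : Mat n) ∈ S) (hfix : ∀ x ∈ S, τ x = x)
    (hgen : StarAlgebra.adjoin ℂ S = ⊤) :
    ∀ x : Mat n, τ x = x := by
  have hstar : ∀ x, τ x = x → τ xᴴ = xᴴ := fun x hx => by rw [hcp.map_conjTranspose, hx]
  intro x
  have hx : x ∈ StarAlgebra.adjoin ℂ S := hgen ▸ StarSubalgebra.mem_top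
  induction hx using StarAlgebra.adjoin_induction with
  | mem x hx => exact hfix x hx
  | algebraMap c => rw [Algebra.algebraMap_eq_smul_one, map_smul, hunital]
  | add x y _ _ hx hy => rw [map_add, hx, hy]
  | mul x y _ _ hx hy =>
    simpa using fixed_conjTranspose_mul hcp hunital hφf hinv (hstar x hx) hy
  | star x _ hx => exact hstar x hx
end
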